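/- arXiv:0710.2330 — 3 statements merged into one kernel-verified Lean document; each statement's English description precedes it below -/
import Mathlib

section
/- Let A be a vector space over ℚ, let B ⊆ A be a ℚ-linear subspace, let P ⊆ A be a cone, and let μ_B : B → ℝ be a nonzero ℚ-linear map such that μ_B(b) ≥ 0 for every b ∈ B ∩ P. Assume that for every a ∈ A there is b ∈ B with b − a ∈ P. Let c ∈ A and suppose the set {μ_B(y) : y ∈ B, y − c ∈ P} (which is nonempty by the cofinality assumption) is bounded below, with infimum e ∈ ℝ. Then there exists a ℚ-linear map μ : A → ℝ extending μ_B such that μ(p) ≥ 0 for all p ∈ P and μ(c) = e. -/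
/-- A subset `P` of a `ℚ`-vector space is a cone if it is closed under addition and
under scalar multiplication by positive rationals. -/
def IsQCone {A : Type*} [AddCommGroup A] [Module ℚ A] (P : Set A) : Prop :=
  (∀ x ∈ P, ∀ y ∈ P, x + y ∈ P) ∧ ∀ q : ℚ, 0 < q → ∀ x ∈ P, q • x ∈ P

/-!
A linear extension `μ` of `f : B → E` is nonnegative on the cone `P` as soon as it lies below the
upper envelope `N x = inf {f y | y ∈ B, y - x ∈ P}`, which is sublinear. So it suffices to find a
linear functional below a sublinear functional `N` that agrees with `N` at a given vector `c`.
Given `c`, the functional `x ↦ inf {N (x + t • c) - t • N c | t ≥ 0}` is sublinear, lies below `N`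
and is at most `-N c` at `-c`. Hence any linear functional below it takes the value `N c` at `c`,
and every minimal sublinear functional is odd, hence linear. Minimal ones exist by Zorn's lemma.
-/

section Sublinear

variable (K : Type*) {A E : Type*} [Field K] [LinearOrder K] [IsStrictOrderedRing K]
  [AddCommGroup A] [Module K A]

/-- Sublinear functionals: the upper bounds in the Hahn–Banach theorem. Homogeneity is required
only for positive scalars; it implies that the functional vanishes at `0`. -/
structure IsSublinear [AddCommGroup E] [PartialOrder E] [Module K E] (N : A → E) : Prop where
  map_add_le (x y : A) : N (x + y) ≤ N x + N y
  map_smul_of_pos {t : K} (ht : 0 < t) (x : A) : N (t • x) = t • N x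

variable {K}

namespace IsSublinear

section PartialOrder

variable [AddCommGroup E] [PartialOrder E] [Module K E] {N : A → E}

theorem map_zero (hN : IsSublinear K N) : N 0 = 0 := by
  have h : N 0 = N 0 + N 0 := by
    simpa only [smul_zero, two_smul] using hN.map_smul_of_pos (two_pos : (0 : K) < 2) 0
  exact left_eq_add.mp h

theorem map_smul_of_nonneg (hN : IsSublinear K N) {t : K} (ht : 0 ≤ t) (x : A) :
    N (t • x) = t • N x := by
  rcases ht.eq_or_lt with rfl | ht
  · rw [zero_smul, zero_smul, hN.map_zero]
  · exact hN.map_smul_of_pos ht x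

theorem neg_map_neg_le [IsOrderedAddMonoid E] (hN : IsSublinear K N) (x : A) : -N (-x) ≤ N x := by
  rw [neg_le_iff_add_nonneg, ← hN.map_zero, ← add_neg_cancel x]
  exact hN.map_add_le x (-x)

variable [PosSMulMono K E]

theorem of_map_smul_le (h_add : ∀ x y, N (x + y) ≤ N x + N y)
    (h_smul : ∀ t : K, 0 < t → ∀ x, N (t • x) ≤ t • N x) : IsSublinear K N where
  map_add_le := h_add
  map_smul_of_pos {t} ht x := by
    refine (h_smul t ht x).antisymm ?_
    rw [← le_inv_smul_iff_of_pos ht]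
    simpa only [inv_smul_smul₀ ht.ne'] using h_smul t⁻¹ (inv_pos.mpr ht) (t • x)

theorem of_isGLB [IsOrderedAddMonoid E] {S : A → Set E} (hS : ∀ x, IsGLB (S x) (N x))
    (h_add : ∀ x y, ∀ a ∈ S x, ∀ b ∈ S y, ∃ r ∈ S (x + y), r ≤ a + b)
    (h_smul : ∀ t : K, 0 < t → ∀ x, ∀ a ∈ S x, ∃ r ∈ S (t • x), r ≤ t • a) :
    IsSublinear K N := by
  refine of_map_smul_le (fun x y => ?_) fun t ht x => ?_
  · have h : ∀ a ∈ S x, ∀ b ∈ S y, N (x + y) ≤ a + b := fun a ha b hb =>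
      let ⟨_, hr, hrab⟩ := h_add x y a ha b hb
      ((hS _).1 hr).trans hrab
    refine sub_le_iff_le_add.mp <| (hS x).2 fun a ha => sub_le_comm.mp <| (hS y).2 fun b hb => ?_
    exact sub_le_iff_le_add'.mpr (h a ha b hb)
  · refine (inv_smul_le_iff_of_pos ht).mp <| (hS x).2 fun a ha => ?_
    obtain ⟨r, hr, hra⟩ := h_smul t ht x a ha
    exact (inv_smul_le_iff_of_pos ht).mpr (((hS _).1 hr).trans hra)

end PartialOrder

variable [AddCommGroup E] [ConditionallyCompleteLattice E] [IsOrderedAddMonoid E] [Module K E]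
  [PosSMulMono K E] {N : A → E}

theorem exists_le_map_neg_le (hN : IsSublinear K N) (c : A) :
    ∃ p ≤ N, IsSublinear K p ∧ p (-c) ≤ -N c := by
  let φ (x : A) (t : K) : E := N (x + t • c) - t • N c
  let S (x : A) : Set E := φ x '' Set.Ici 0
  have hS_bdd (x : A) : BddBelow (S x) := by
    refine ⟨-N (-x), ?_⟩
    rintro _ ⟨t, ht, rfl⟩
    have h : t • N c ≤ N (x + t • c) + N (-x) := by
      rw [← hN.map_smul_of_nonneg ht]
      simpa only [add_neg_cancel_comm] using hN.map_add_le (x + t • c) (-x)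
    exact le_sub_iff_add_le.mpr (neg_add_le_iff_le_add'.mpr h)
  have hS (x : A) : IsGLB (S x) (sInf (S x)) :=
    isGLB_csInf (Set.nonempty_Ici.image _) (hS_bdd x)
  refine ⟨fun x => sInf (S x), fun x => ?_, of_isGLB hS ?_ ?_, ?_⟩
  · exact (hS x).1 ⟨0, Set.self_mem_Ici, by simp [φ]⟩
  · rintro x y _ ⟨s, hs, rfl⟩ _ ⟨t, ht, rfl⟩
    refine ⟨_, ⟨s + t, add_nonneg hs ht, rfl⟩, ?_⟩
    simp only [φ, add_smul, sub_add_sub_comm, add_add_add_comm x y]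
    exact sub_le_sub_right (hN.map_add_le _ _) _
  · rintro q hq x _ ⟨t, ht, rfl⟩
    refine ⟨_, ⟨q * t, mul_nonneg hq.le ht, rfl⟩, le_of_eq ?_⟩
    simp only [φ, mul_smul, ← smul_add, hN.map_smul_of_pos hq, smul_sub]
  · exact (hS (-c)).1 ⟨1, zero_le_one, by simp [φ, hN.map_zero]⟩

theorem exists_mem_lowerBounds_of_isChain {C : Set (A → E)} (hC : ∀ p ∈ C, IsSublinear K p)
    (hchain : IsChain (· ≤ ·) C) (hne : C.Nonempty) :
    ∃ q ∈ lowerBounds C, IsSublinear K q := by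
  let S (x : A) : Set E := Function.eval x '' C
  have hS_bdd (x : A) : BddBelow (S x) := by
    obtain ⟨p, hp⟩ := hne
    refine ⟨-p (-x), ?_⟩
    rintro _ ⟨q, hq, rfl⟩
    rcases hchain.total hp hq with hpq | hqp
    · exact ((hC p hp).neg_map_neg_le x).trans (hpq x)
    · exact (neg_le_neg (hqp (-x))).trans ((hC q hq).neg_map_neg_le x)
  have hS (x : A) : IsGLB (S x) (sInf (S x)) := isGLB_csInf (hne.image _) (hS_bdd x)
  refine ⟨fun x => sInf (S x), fun p hp x => (hS x).1 ⟨p, hp, rfl⟩, of_isGLB hS ?_ ?_⟩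
  · rintro x y _ ⟨p, hp, rfl⟩ _ ⟨q, hq, rfl⟩
    rcases hchain.total hp hq with hpq | hqp
    · exact ⟨_, ⟨p, hp, rfl⟩, ((hC p hp).map_add_le x y).trans (by gcongr; exact hpq y)⟩
    · exact ⟨_, ⟨q, hq, rfl⟩, ((hC q hq).map_add_le x y).trans (by gcongr; exact hqp x)⟩
  · rintro t ht x _ ⟨p, hp, rfl⟩
    exact ⟨_, ⟨p, hp, rfl⟩, ((hC p hp).map_smul_of_pos ht x).le⟩

theorem exists_le_minimal (hN : IsSublinear K N) : ∃ p ≤ N, Minimal (IsSublinear K) p := by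
  obtain ⟨p, hpN, hp⟩ := zorn_le_nonempty₀ (α := (A → E)ᵒᵈ)
    {p | IsSublinear K (OrderDual.ofDual p)}
    (fun C hC hchain p hp =>
      let ⟨q, hq, hq_sub⟩ := exists_mem_lowerBounds_of_isChain (C := OrderDual.toDual ⁻¹' C)
        (fun _ h => hC h) hchain.symm ⟨p, hp⟩
      ⟨OrderDual.toDual q, hq_sub, fun _ h => hq h⟩)
    (OrderDual.toDual N) hN
  exact ⟨OrderDual.ofDual p, hpN, hp⟩

theorem map_neg_of_minimal {p : A → E} (hp : Minimal (IsSublinear K) p) (x : A) :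
    p (-x) = -p x := by
  refine le_antisymm ?_ (neg_le.mp (hp.prop.neg_map_neg_le x))
  obtain ⟨q, hqp, hq, hqx⟩ := hp.prop.exists_le_map_neg_le x
  exact (hp.le_of_le hq hqp (-x)).trans hqx

theorem exists_linearMap_eq_of_minimal {p : A → E} (hp : Minimal (IsSublinear K) p) :
    ∃ μ : A →ₗ[K] E, ⇑μ = p := by
  have h_neg := map_neg_of_minimal hp
  have h_add (x y : A) : p (x + y) = p x + p y := by
    refine (hp.prop.map_add_le x y).antisymm ?_
    rw [← le_sub_iff_add_le, sub_eq_add_neg, ← h_neg]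
    simpa only [add_neg_cancel_right] using hp.prop.map_add_le (x + y) (-y)
  have h_smul (t : K) (x : A) : p (t • x) = t • p x := by
    rcases le_total 0 t with ht | ht
    · exact hp.prop.map_smul_of_nonneg ht x
    · rw [← neg_smul_neg, hp.prop.map_smul_of_nonneg (neg_nonneg.mpr ht), h_neg, neg_smul_neg]
  exact ⟨{ toFun := p, map_add' := h_add, map_smul' := h_smul }, rfl⟩

theorem exists_linearMap_le_map_eq (hN : IsSublinear K N) (c : A) :
    ∃ μ : A →ₗ[K] E, ⇑μ ≤ N ∧ μ c = N c := by
  obtain ⟨p, hpN, hp, hpc⟩ := hN.exists_le_map_neg_le c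
  obtain ⟨q, hqp, hq⟩ := hp.exists_le_minimal
  obtain ⟨μ, rfl⟩ := exists_linearMap_eq_of_minimal hq
  refine ⟨μ, hqp.trans hpN, ((hqp.trans hpN) c).antisymm ?_⟩
  simpa only [map_neg, neg_le_neg_iff] using (hqp (-c)).trans hpc

end IsSublinear

end Sublinear

theorem linearMap_eq_of_le {R M E : Type*} [Semiring R] [AddCommGroup M] [Module R M]
    [AddCommGroup E] [PartialOrder E] [IsOrderedAddMonoid E] [Module R E] {f g : M →ₗ[R] E}
    (h : ∀ x, f x ≤ g x) : f = g :=
  LinearMap.ext fun x => (h x).antisymm <| by simpa only [map_neg, neg_le_neg_iff] using h (-x)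

section UpperValues

variable {K A E : Type*} [Field K] [LinearOrder K] [AddCommGroup A] [Module K A]
  [AddCommGroup E] [Module K E] {B : Submodule K A}

/-- The values of `f : B → E` at the elements of `B` that dominate `x` for the preorder defined by
the cone `P`; a positive extension of `f` is bounded above by all of them at `x`. -/
def upperValues (f : B →ₗ[K] E) (P : ConvexCone K A) (x : A) : Set E :=
  {r | ∃ y : B, (y : A) - x ∈ P ∧ f y = r}

variable {f : B →ₗ[K] E} {P : ConvexCone K A}

theorem upperValues_nonempty (hcof : ∀ a : A, ∃ b : B, (b : A) - a ∈ P) (x : A) :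
    (upperValues f P x).Nonempty :=
  let ⟨b, hb⟩ := hcof x
  ⟨f b, b, hb, rfl⟩

theorem add_mem_upperValues {x y : A} {r s : E} (hr : r ∈ upperValues f P x)
    (hs : s ∈ upperValues f P y) : r + s ∈ upperValues f P (x + y) := by
  obtain ⟨a, ha, rfl⟩ := hr
  obtain ⟨b, hb, rfl⟩ := hs
  refine ⟨a + b, ?_, map_add f a b⟩
  simpa only [Submodule.coe_add, add_sub_add_comm] using P.add_mem ha hb

theorem smul_mem_upperValues {t : K} (ht : 0 < t) {x : A} {r : E}
    (hr : r ∈ upperValues f P x) : t • r ∈ upperValues f P (t • x) := by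
  obtain ⟨y, hy, rfl⟩ := hr
  refine ⟨t • y, ?_, map_smul f t y⟩
  simpa only [Submodule.coe_smul, smul_sub] using P.smul_mem ht hy

theorem add_mem_upperValues_coe {r : E} (hr : r ∈ upperValues f P 0) (b : B) :
    r + f b ∈ upperValues f P b := by
  obtain ⟨y, hy, rfl⟩ := hr
  refine ⟨y + b, ?_, map_add f y b⟩
  simpa only [Submodule.coe_add, add_sub_cancel_right, sub_zero] using hy

theorem upperValues_subset_sub {p : A} (hp : p ∈ P) (x : A) :
    upperValues f P x ⊆ upperValues f P (x - p) := by
  rintro _ ⟨y, hy, rfl⟩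
  refine ⟨y, ?_, rfl⟩
  simpa only [sub_sub_eq_add_sub, sub_add_eq_add_sub] using P.add_mem hy hp

section PartialOrder

variable [PartialOrder E] {N : A → E}

theorem map_neg_nonpos_of_isGLB_upperValues (hN : ∀ x, IsGLB (upperValues f P x) (N x))
    (hN₀ : N 0 = 0) {p : A} (hp : p ∈ P) : N (-p) ≤ 0 := by
  rw [← hN₀, ← zero_sub]
  exact (hN 0).mono (hN (0 - p)) (upperValues_subset_sub hp 0)

variable [IsOrderedAddMonoid E]

theorem bddBelow_upperValues (hf : ∀ b : B, (b : A) ∈ P → 0 ≤ f b)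
    (hcof : ∀ a : A, ∃ b : B, (b : A) - a ∈ P) (x : A) : BddBelow (upperValues f P x) := by
  obtain ⟨s, hs⟩ := upperValues_nonempty (f := f) hcof (-x)
  refine ⟨-s, fun r hr => neg_le_iff_add_nonneg.mpr ?_⟩
  obtain ⟨y, hy, hyrs⟩ := add_mem_upperValues hr hs
  rw [add_neg_cancel, sub_zero] at hy
  exact hyrs ▸ hf y hy

theorem isSublinear_of_isGLB_upperValues [IsStrictOrderedRing K] [PosSMulMono K E]
    (hN : ∀ x, IsGLB (upperValues f P x) (N x)) : IsSublinear K N :=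
  .of_isGLB hN (fun _ _ _ ha _ hb => ⟨_, add_mem_upperValues ha hb, le_rfl⟩)
    fun _ ht _ _ ha => ⟨_, smul_mem_upperValues ht ha, le_rfl⟩

theorem le_of_isGLB_upperValues (hN : ∀ x, IsGLB (upperValues f P x) (N x)) (hN₀ : N 0 = 0)
    (b : B) : N b ≤ f b := by
  rw [← sub_nonpos, ← hN₀]
  exact (hN 0).2 fun r hr => sub_le_iff_le_add.mpr ((hN b).1 (add_mem_upperValues_coe hr b))

end PartialOrder

end UpperValues

theorem stmt2_general {K A E : Type*} [Field K] [LinearOrder K] [IsStrictOrderedRing K]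
    [AddCommGroup A] [Module K A] [AddCommGroup E] [ConditionallyCompleteLattice E]
    [IsOrderedAddMonoid E] [Module K E] [PosSMulMono K E]
    (B : Submodule K A) (P : ConvexCone K A) (f : B →ₗ[K] E)
    (hf : ∀ b : B, (b : A) ∈ P → 0 ≤ f b) (hcof : ∀ a : A, ∃ b : B, (b : A) - a ∈ P)
    (c : A) (e : E) (he : IsGLB (upperValues f P c) e) :
    ∃ μ : A →ₗ[K] E, (∀ b : B, μ b = f b) ∧ (∀ p ∈ P, 0 ≤ μ p) ∧ μ c = e := by
  have h_exists_isGLB (x : A) : ∃ r, IsGLB (upperValues f P x) r :=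
    ⟨_, isGLB_csInf (upperValues_nonempty hcof x) (bddBelow_upperValues hf hcof x)⟩
  choose N hN using h_exists_isGLB
  have hN_sub : IsSublinear K N := isSublinear_of_isGLB_upperValues hN
  obtain ⟨μ, hμN, hμc⟩ := hN_sub.exists_linearMap_le_map_eq c
  refine ⟨μ, fun b => ?_, fun p hp => ?_, hμc.trans ((hN c).unique he)⟩
  · have hμ_le (b : B) : (μ ∘ₗ B.subtype) b ≤ f b :=
      (hμN b).trans (le_of_isGLB_upperValues hN hN_sub.map_zero b)
    exact LinearMap.congr_fun (linearMap_eq_of_le hμ_le) b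
  · have hμ_neg : μ (-p) ≤ 0 :=
      (hμN (-p)).trans (map_neg_nonpos_of_isGLB_upperValues hN hN_sub.map_zero hp)
    simpa only [map_neg, neg_nonpos] using hμ_neg

theorem stmt2 {A : Type*} [AddCommGroup A] [Module ℚ A]
    (B : Submodule ℚ A) (P : Set A) (hP : IsQCone P)
    (μB : B →ₗ[ℚ] ℝ) (hμBne : μB ≠ 0)
    (hμBpos : ∀ b : B, (b : A) ∈ P → 0 ≤ μB b)
    (hcof : ∀ a : A, ∃ b : B, (b : A) - a ∈ P)
    (c : A) (e : ℝ)
    (he : IsGLB {r : ℝ | ∃ y : B, (y : A) - c ∈ P ∧ μB y = r} e) :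
    ∃ μ : A →ₗ[ℚ] ℝ, (∀ b : B, μ (b : A) = μB b) ∧ (∀ p ∈ P, 0 ≤ μ p) ∧ μ c = e :=
  stmt2_general B ⟨P, fun q hq x hx => hP.2 q hq x hx, fun x hx y hy => hP.1 x hx y hy⟩
    μB hμBpos hcof c e he
end

section
/- Let A be a vector space over ℚ, let Q ⊆ A be a cone such that for every d ∈ A either d ∈ Q or −d ∈ Q, and let b ∈ Q with −b ∉ Q. Assume that for every a ∈ A there exists a natural number n with n • b − a ∈ Q. Then there exists a ℚ-linear map μ : A → ℝ such that μ(b) = 1 and μ(q) ≥ 0 for every q ∈ Q. -/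
/-!
Read `y - x ∈ Q` as `x ≤ y`. This is a total preorder in which `b` is an order unit, so an
element `a` cuts the rational multiples of `b` in two, and `μ a` is the real number at the cut,
`sup {r ∈ ℚ | r • b ≤ a}`. Adding lower bounds makes `μ` superadditive, and totality gives
`-μ a ≤ μ (-a)`; together these force additivity, which over `ℚ` is linearity.
-/

section CutValue

variable {A : Type*} [AddCommGroup A] [Module ℚ A] {Q : Set A} {a b c : A} {r s : ℚ}

/-- The lower Dedekind cut of `a` measured in units of `b`: the rationals `r` with `r • b ≤ a`
for the preorder defined by `Q`. It is taken inside `ℝ` so that its supremum exists. -/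
def lowerCut (Q : Set A) (b a : A) : Set ℝ :=
  ((↑) : ℚ → ℝ) '' {r : ℚ | a - r • b ∈ Q}

/-- The size of `a` measured in units of `b`, as the supremum of its lower cut; it has the junk
value `0` when that cut is empty or unbounded. -/
noncomputable def cutValue (Q : Set A) (b a : A) : ℝ :=
  sSup (lowerCut Q b a)

theorem IsQCone.le_of_sub_smul_mem_of_smul_sub_mem (hQ : IsQCone Q) (hnb : -b ∉ Q)
    (hr : a - r • b ∈ Q) (hs : s • b - a ∈ Q) : r ≤ s := by
  by_contra! hsr
  have hpos : 0 < r - s := sub_pos.mpr hsr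
  have hmem : (r - s) • -b ∈ Q := by
    convert hQ.1 _ hr _ hs using 1
    module
  exact hnb (by simpa only [inv_smul_smul₀ hpos.ne'] using hQ.2 _ (inv_pos.mpr hpos) _ hmem)

theorem lowerCut_nonempty (harch : ∀ a : A, ∃ n : ℕ, n • b - a ∈ Q) (a : A) :
    (lowerCut Q b a).Nonempty := by
  obtain ⟨n, hn⟩ := harch (-a)
  refine ⟨_, -(n : ℚ), ?_, rfl⟩
  rw [← Nat.cast_smul_eq_nsmul ℚ] at hn
  rw [Set.mem_ofPred_eq]
  convert hn using 1
  module

theorem IsQCone.mem_upperBounds_lowerCut (hQ : IsQCone Q) (hnb : -b ∉ Q)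
    (hs : s • b - a ∈ Q) : (s : ℝ) ∈ upperBounds (lowerCut Q b a) := by
  rintro _ ⟨r, hr, rfl⟩
  exact Rat.cast_le.mpr (hQ.le_of_sub_smul_mem_of_smul_sub_mem hnb hr hs)

theorem IsQCone.bddAbove_lowerCut (hQ : IsQCone Q) (hnb : -b ∉ Q)
    (harch : ∀ a : A, ∃ n : ℕ, n • b - a ∈ Q) (a : A) : BddAbove (lowerCut Q b a) := by
  obtain ⟨n, hn⟩ := harch a
  exact ⟨_, hQ.mem_upperBounds_lowerCut hnb (by rwa [Nat.cast_smul_eq_nsmul ℚ])⟩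

theorem IsQCone.le_cutValue (hQ : IsQCone Q) (hnb : -b ∉ Q)
    (harch : ∀ a : A, ∃ n : ℕ, n • b - a ∈ Q) (hr : a - r • b ∈ Q) :
    (r : ℝ) ≤ cutValue Q b a :=
  le_csSup (hQ.bddAbove_lowerCut hnb harch a) ⟨r, hr, rfl⟩

theorem IsQCone.cutValue_le (hQ : IsQCone Q) (hnb : -b ∉ Q)
    (harch : ∀ a : A, ∃ n : ℕ, n • b - a ∈ Q) (hs : s • b - a ∈ Q) :
    cutValue Q b a ≤ s :=
  csSup_le (lowerCut_nonempty harch a) (hQ.mem_upperBounds_lowerCut hnb hs)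

open scoped Pointwise in
theorem IsQCone.lowerCut_add_subset (hQ : IsQCone Q) :
    lowerCut Q b a + lowerCut Q b c ⊆ lowerCut Q b (a + c) := by
  rintro _ ⟨_, ⟨r, hr, rfl⟩, _, ⟨s, hs, rfl⟩, rfl⟩
  refine ⟨r + s, ?_, Rat.cast_add r s⟩
  rw [Set.mem_ofPred_eq]
  convert hQ.1 _ hr _ hs using 1
  module

theorem IsQCone.cutValue_add_le_cutValue_add (hQ : IsQCone Q) (hnb : -b ∉ Q)
    (harch : ∀ a : A, ∃ n : ℕ, n • b - a ∈ Q) (a c : A) :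
    cutValue Q b a + cutValue Q b c ≤ cutValue Q b (a + c) := by
  have hne := lowerCut_nonempty harch
  have hbdd := hQ.bddAbove_lowerCut hnb harch
  rw [cutValue, cutValue, ← csSup_add (hne a) (hbdd a) (hne c) (hbdd c)]
  exact csSup_le_csSup (hbdd (a + c)) ((hne a).add (hne c)) hQ.lowerCut_add_subset

theorem IsQCone.neg_cutValue_le_cutValue_neg (hQ : IsQCone Q) (hlin : ∀ d : A, d ∈ Q ∨ -d ∈ Q)
    (hnb : -b ∉ Q) (harch : ∀ a : A, ∃ n : ℕ, n • b - a ∈ Q) (a : A) :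
    -cutValue Q b a ≤ cutValue Q b (-a) := by
  by_contra! hlt
  obtain ⟨r, hr_gt, hr_lt⟩ := exists_rat_btwn hlt
  rcases hlin (-a - r • b) with hmem | hmem
  · exact hr_gt.not_ge (hQ.le_cutValue hnb harch hmem)
  · have hneg : a - (-r) • b ∈ Q := by
      convert hmem using 1
      module
    have hle := hQ.le_cutValue hnb harch hneg
    push_cast at hle
    linarith

theorem IsQCone.cutValue_add (hQ : IsQCone Q) (hlin : ∀ d : A, d ∈ Q ∨ -d ∈ Q)
    (hnb : -b ∉ Q) (harch : ∀ a : A, ∃ n : ℕ, n • b - a ∈ Q) (a c : A) :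
    cutValue Q b (a + c) = cutValue Q b a + cutValue Q b c := by
  refine le_antisymm ?_ (hQ.cutValue_add_le_cutValue_add hnb harch a c)
  have hsuper := hQ.cutValue_add_le_cutValue_add hnb harch (a + c) (-c)
  rw [add_neg_cancel_right] at hsuper
  linarith [hQ.neg_cutValue_le_cutValue_neg hlin hnb harch c]

theorem IsQCone.cutValue_nonneg (hQ : IsQCone Q) (hnb : -b ∉ Q)
    (harch : ∀ a : A, ∃ n : ℕ, n • b - a ∈ Q) (ha : a ∈ Q) : 0 ≤ cutValue Q b a := by
  simpa using hQ.le_cutValue (r := 0) hnb harch (by simpa using ha)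

theorem IsQCone.cutValue_self (hQ : IsQCone Q) (h0 : 0 ∈ Q) (hnb : -b ∉ Q)
    (harch : ∀ a : A, ∃ n : ℕ, n • b - a ∈ Q) : cutValue Q b b = 1 := by
  have hmem : b - (1 : ℚ) • b ∈ Q ∧ (1 : ℚ) • b - b ∈ Q := by simpa using h0
  exact_mod_cast le_antisymm (hQ.cutValue_le hnb harch hmem.2) (hQ.le_cutValue hnb harch hmem.1)

end CutValue

theorem stmt4 {A : Type*} [AddCommGroup A] [Module ℚ A]
    (Q : Set A) (hQ : IsQCone Q) (hlin : ∀ d : A, d ∈ Q ∨ -d ∈ Q)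
    (b : A) (hb : b ∈ Q) (hnb : -b ∉ Q)
    (harch : ∀ a : A, ∃ n : ℕ, n • b - a ∈ Q) :
    ∃ μ : A →ₗ[ℚ] ℝ, μ b = 1 ∧ ∀ q ∈ Q, 0 ≤ μ q := by
  have h0 : (0 : A) ∈ Q := by simpa using hlin 0
  exact ⟨(AddMonoidHom.mk' (cutValue Q b) (hQ.cutValue_add hlin hnb harch)).toRatLinearMap,
    hQ.cutValue_self h0 hnb harch, fun _ hq ↦ hQ.cutValue_nonneg hnb harch hq⟩
end

section
/- (VC Theorem*) Let (X, Ω, μ) be a probability space and let 𝒞 ⊆ Ω be a family of events with finite VC dimension, i.e. there is a natural number d such that no d-element subset of X is shattered by 𝒞. For each k ≥ 1, let μ^k denote the product probability measure on X^k, and let G_k : X^k → [0,1] be an essential supremum with respect to μ^k of the family of functions {p̄ ↦ |fr_k(A, p̄) − μ(A)| : A ∈ 𝒞}. Then for every ε > 0, μ^k({p̄ ∈ X^k : G_k(p̄) > ε}) → 0 as k → ∞. -/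
open MeasureTheory

/-- A family `C` of subsets of `X` shatters a finite set `F` if every subset of `F`
is of the form `F ∩ A` for some `A ∈ C`. -/
def Shatters {X : Type*} (C : Set (Set X)) (F : Finset X) : Prop :=
  ∀ S : Finset X, S ⊆ F → ∃ A ∈ C, (F : Set X) ∩ A = (S : Set X)

open Classical in
/-- `freq k A p` is the proportion of coordinates of the `k`-tuple `p` lying in `A`. -/
noncomputable def freq {X : Type*} (k : ℕ) (A : Set X) (p : Fin k → X) : ℝ :=
  ((Finset.univ.filter fun i => p i ∈ A).card : ℝ) / k

/-
Up to null sets, the essential supremum is the supremum over a suitable countable subfamily of `C`,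
so measurability is no obstacle and it suffices to bound the expected uniform deviation over
countable families. Comparing the sample with an independent ghost sample and flipping signs at
random reduces this to the expected maximum of signed sums over the traces of `C` on `2 * k` points.
By Sauer–Shelah there are at most `(2 * k + 1) ^ d` traces, so Massart's exponential-moment argument
bounds the expectation by `√(2 * log (2 * (2 * k + 1) ^ d) / k)`, which tends to `0`; Markov's
inequality concludes.
-/

open Filter
open scoped ENNReal Topology

section EssentialSupremum

variable {Ω J : Type*} [MeasurableSpace Ω] {ν : Measure Ω} {f : J → Ω → ℝ≥0∞} {I : Set J}

variable (ν f I) in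
theorem exists_countable_forall_lintegral_biSup_le :
    ∃ s ⊆ I, s.Countable ∧ ∀ t ⊆ I, t.Countable →
      ∫⁻ x, ⨆ j ∈ t, f j x ∂ν ≤ ∫⁻ x, ⨆ j ∈ s, f j x ∂ν := by
  set values : Set ℝ≥0∞ := (fun t => ∫⁻ x, ⨆ j ∈ t, f j x ∂ν) '' {t | t ⊆ I ∧ t.Countable}
  have hvalues : values.Nonempty := ⟨_, ∅, ⟨I.empty_subset, Set.countable_empty⟩, rfl⟩
  obtain ⟨v, -, hv, hv_mem⟩ := exists_seq_tendsto_sSup hvalues (OrderTop.bddAbove _)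
  choose t ht htv using hv_mem
  refine ⟨⋃ n, t n, Set.iUnion_subset fun n => (ht n).1,
    Set.countable_iUnion fun n => (ht n).2, fun t' ht'I ht' => ?_⟩
  calc ∫⁻ x, ⨆ j ∈ t', f j x ∂ν ≤ sSup values := le_sSup ⟨t', ⟨ht'I, ht'⟩, rfl⟩
    _ ≤ ∫⁻ x, ⨆ j ∈ ⋃ n, t n, f j x ∂ν := le_of_tendsto' hv fun n => by
      rw [← htv n]
      exact lintegral_mono fun x => biSup_mono fun j hj => Set.mem_iUnion_of_mem n hj

theorem exists_countable_forall_ae_le_biSup (hf : ∀ j ∈ I, AEMeasurable (f j) ν)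
    (hfin : ∀ s ⊆ I, s.Countable → ∫⁻ x, ⨆ j ∈ s, f j x ∂ν ≠ ∞) :
    ∃ s ⊆ I, s.Countable ∧ ∀ j ∈ I, ∀ᵐ x ∂ν, f j x ≤ ⨆ i ∈ s, f i x := by
  obtain ⟨s, hsI, hs, hmax⟩ := exists_countable_forall_lintegral_biSup_le ν f I
  refine ⟨s, hsI, hs, fun j hj => ?_⟩
  have hjsI : insert j s ⊆ I := Set.insert_subset hj hsI
  have hjs : (insert j s).Countable := hs.insert j
  -- The maximal integral over `s` cannot increase when `j` is added, so neither can the supremum.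
  have heq : (fun x => ⨆ i ∈ s, f i x) =ᵐ[ν] fun x => ⨆ i ∈ insert j s, f i x :=
    ae_eq_of_ae_le_of_lintegral_le
      (ae_of_all _ fun x => biSup_mono fun i hi => Set.mem_insert_of_mem j hi)
      (hfin s hsI hs) (.biSup _ hjs fun i hi => hf i (hjsI hi)) (hmax _ hjsI hjs)
  filter_upwards [heq] with x hx
  exact hx ▸ le_biSup (fun i => f i x) (Set.mem_insert j s)

end EssentialSupremum

section Symmetrization

variable {Ω X J ι E : Type*} [MeasurableSpace Ω] [MeasurableSpace X] [Fintype ι]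
  [NormedAddCommGroup E]

theorem lintegral_biSup_enorm_sum_sub_eq_signed (μ : Measure X) [SigmaFinite μ] (f : J → X → E)
    (S : Set J) (s : ι → ℤˣ) :
    ∫⁻ z, ⨆ j ∈ S, ‖∑ i, (f j (z i).1 - f j (z i).2)‖ₑ ∂(Measure.pi fun _ : ι => μ.prod μ)
      = ∫⁻ z, ⨆ j ∈ S, ‖∑ i, s i • (f j (z i).1 - f j (z i).2)‖ₑ
          ∂(Measure.pi fun _ : ι => μ.prod μ) := by
  -- A sign `-1` in coordinate `i` amounts to exchanging the two points of the `i`-th pair.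
  let e (i : ι) : X × X ≃ᵐ X × X := if s i = 1 then .refl _ else .prodComm
  have he : MeasurePreserving (MeasurableEquiv.piCongrRight e)
      (Measure.pi fun _ : ι => μ.prod μ) (Measure.pi fun _ : ι => μ.prod μ) := by
    refine measurePreserving_pi _ _ fun i => ?_
    by_cases hi : s i = 1
    · simp only [e, if_pos hi]
      exact MeasurePreserving.id _
    · simp only [e, if_neg hi]
      exact Measure.measurePreserving_swap
  have hsign (j : J) (z : ι → X × X) (i : ι) :
      f j (e i (z i)).1 - f j (e i (z i)).2 = s i • (f j (z i).1 - f j (z i).2) := by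
    rcases Int.units_eq_one_or (s i) with hi | hi <;> simp [e, hi, MeasurableEquiv.prodComm]
  rw [← he.lintegral_comp_emb (MeasurableEquiv.measurableEmbedding _)]
  exact lintegral_congr fun z => by simp_rw [← hsign]; rfl

variable [NormedSpace ℝ E] [CompleteSpace E]

theorem lintegral_biSup_enorm_sub_integral_le (P : Measure Ω)
    [IsProbabilityMeasure P] {g : J → Ω → E} {S : Set J} (hS : S.Countable)
    (hg : ∀ j ∈ S, Integrable (g j) P) :
    ∫⁻ p, ⨆ j ∈ S, ‖g j p - ∫ q, g j q ∂P‖ₑ ∂P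
      ≤ ∫⁻ w, ⨆ j ∈ S, ‖g j w.1 - g j w.2‖ₑ ∂(P.prod P) := by
  have hmeas : AEMeasurable (fun w : Ω × Ω => ⨆ j ∈ S, ‖g j w.1 - g j w.2‖ₑ) (P.prod P) :=
    .biSup S hS fun j hj =>
      (((hg j hj).comp_fst P).sub ((hg j hj).comp_snd P)).aestronglyMeasurable.enorm
  rw [lintegral_prod _ hmeas]
  refine lintegral_mono fun p => iSup₂_le fun j hj => ?_
  have hmean : g j p - ∫ q, g j q ∂P = ∫ q, (g j p - g j q) ∂P := by
    rw [integral_sub (integrable_const _) (hg j hj), integral_const, probReal_univ, one_smul]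
  rw [hmean]
  exact (enorm_integral_le_lintegral_enorm _).trans
    (lintegral_mono fun q => le_biSup (fun j => ‖g j p - g j q‖ₑ) hj)

theorem lintegral_biSup_enorm_sum_sub_integral_le (μ : Measure X)
    [IsProbabilityMeasure μ] {f : J → X → E} {S : Set J} (hS : S.Countable)
    (hf : ∀ j ∈ S, Integrable (f j) μ) :
    ∫⁻ p, ⨆ j ∈ S, ‖∑ i, (f j (p i) - ∫ x, f j x ∂μ)‖ₑ ∂(Measure.pi fun _ : ι => μ)
      ≤ ∫⁻ z, ⨆ j ∈ S, ‖∑ i, (f j (z i).1 - f j (z i).2)‖ₑ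
          ∂(Measure.pi fun _ : ι => μ.prod μ) := by
  have hint (j : J) (hj : j ∈ S) (i : ι) :
      Integrable (fun p : ι → X => f j (p i)) (Measure.pi fun _ => μ) :=
    integrable_comp_eval (hf j hj)
  have hmean (j : J) (hj : j ∈ S) (p : ι → X) : ∑ i, (f j (p i) - ∫ x, f j x ∂μ)
      = ∑ i, f j (p i) - ∫ q : ι → X, ∑ i, f j (q i) ∂(Measure.pi fun _ => μ) := by
    rw [integral_finsetSum _ fun i _ => hint j hj i, Finset.sum_sub_distrib]
    simp_rw [integral_comp_eval (μ := fun _ : ι => μ) (hf j hj).aestronglyMeasurable]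
  have hghost := lintegral_biSup_enorm_sub_integral_le (Measure.pi fun _ : ι => μ)
    (g := fun j p => ∑ i, f j (p i)) hS fun j hj => integrable_finsetSum _ fun i _ => hint j hj i
  have hpair := measurePreserving_arrowProdEquivProdArrow X X ι (fun _ => μ) (fun _ => μ)
  rw [← hpair.lintegral_comp_emb (MeasurableEquiv.measurableEmbedding _)] at hghost
  calc _ = _ := lintegral_congr fun p => biSup_congr fun j hj => by rw [hmean j hj p]
    _ ≤ _ := hghost
    _ = _ := lintegral_congr fun z => biSup_congr fun j _ => by
      rw [Finset.sum_sub_distrib]; rfl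

theorem lintegral_biSup_enorm_sum_sub_integral_le_of_signed [DecidableEq ι] (μ : Measure X)
    [IsProbabilityMeasure μ] {f : J → X → E} {S : Set J} (hS : S.Countable)
    (hf : ∀ j ∈ S, Integrable (f j) μ) {B : ℝ≥0∞}
    (hB : ∀ z : ι → X × X, ∑ s : ι → ℤˣ, ⨆ j ∈ S, ‖∑ i, s i • (f j (z i).1 - f j (z i).2)‖ₑ
      ≤ 2 ^ Fintype.card ι * B) :
    ∫⁻ p, ⨆ j ∈ S, ‖∑ i, (f j (p i) - ∫ x, f j x ∂μ)‖ₑ ∂(Measure.pi fun _ : ι => μ) ≤ B := by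
  refine (lintegral_biSup_enorm_sum_sub_integral_le μ hS hf).trans ?_
  set Q : Measure (ι → X × X) := Measure.pi fun _ => μ.prod μ
  set pairSup := ∫⁻ z, ⨆ j ∈ S, ‖∑ i, (f j (z i).1 - f j (z i).2)‖ₑ ∂Q
  have hmeas (s : ι → ℤˣ) : AEMeasurable
      (fun z => ⨆ j ∈ S, ‖∑ i, s i • (f j (z i).1 - f j (z i).2)‖ₑ) Q := by
    refine .biSup S hS fun j hj => (Integrable.aestronglyMeasurable ?_).enorm
    have hdiff : Integrable (fun w : X × X => f j w.1 - f j w.2) (μ.prod μ) :=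
      ((hf j hj).comp_fst μ).sub ((hf j hj).comp_snd μ)
    refine integrable_finsetSum _ fun i _ => ?_
    have hi : Integrable (fun z : ι → X × X => f j (z i).1 - f j (z i).2) Q :=
      integrable_comp_eval (μ := fun _ : ι => μ.prod μ) hdiff
    rcases Int.units_eq_one_or (s i) with h | h
    · simpa only [h, one_smul] using hi
    · simp only [h, Units.neg_smul, one_smul]
      exact hi.neg
  have haverage : 2 ^ Fintype.card ι * pairSup ≤ 2 ^ Fintype.card ι * B :=
    calc 2 ^ Fintype.card ι * pairSup = ∑ _s : ι → ℤˣ, pairSup := by simp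
      _ = ∑ s : ι → ℤˣ, ∫⁻ z, ⨆ j ∈ S, ‖∑ i, s i • (f j (z i).1 - f j (z i).2)‖ₑ ∂Q :=
        Finset.sum_congr rfl fun s _ => lintegral_biSup_enorm_sum_sub_eq_signed μ f S s
      _ = ∫⁻ z, ∑ s : ι → ℤˣ, ⨆ j ∈ S, ‖∑ i, s i • (f j (z i).1 - f j (z i).2)‖ₑ ∂Q :=
        (lintegral_finsetSum' _ fun s _ => hmeas s).symm
      _ ≤ ∫⁻ _, 2 ^ Fintype.card ι * B ∂Q := lintegral_mono hB
      _ = 2 ^ Fintype.card ι * B := by simp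
  exact (ENNReal.mul_le_mul_iff_right (by positivity) (by simp)).1 haverage

end Symmetrization

section Rademacher

variable {ι J : Type*} [Fintype ι] [DecidableEq ι]

theorem sum_exp_signed_sum (a : ι → ℝ) :
    ∑ s : ι → ℤˣ, Real.exp (∑ i, s i • a i) = 2 ^ Fintype.card ι * ∏ i, Real.cosh (a i) := by
  have hcosh (i : ι) : ∑ u : ℤˣ, Real.exp (u • a i) = 2 * Real.cosh (a i) := by
    rw [Real.cosh_eq, Fintype.sum_eq_add 1 (-1) (by decide)
      fun u hu => (Int.units_eq_one_or u).elim (absurd · hu.1) (absurd · hu.2)]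
    simp only [one_smul, Units.neg_smul]
    ring
  calc ∑ s : ι → ℤˣ, Real.exp (∑ i, s i • a i) = ∏ i, ∑ u : ℤˣ, Real.exp (u • a i) := by
        simp_rw [Fintype.prod_sum, Real.exp_sum]
    _ = 2 ^ Fintype.card ι * ∏ i, Real.cosh (a i) := by
        simp_rw [hcosh, Finset.prod_mul_distrib, Finset.prod_const, Finset.card_univ]

theorem sum_cosh_signed_sum_le {a : ι → ℝ} {R : ℝ} (ha : ∑ i, a i ^ 2 ≤ R) (t : ℝ) :
    ∑ s : ι → ℤˣ, Real.cosh (t * ∑ i, s i • a i)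
      ≤ 2 ^ Fintype.card ι * Real.exp (t ^ 2 * R / 2) := by
  have hexp (r : ℝ) : ∑ s : ι → ℤˣ, Real.exp (r * ∑ i, s i • a i)
      = 2 ^ Fintype.card ι * ∏ i, Real.cosh (r * a i) := by
    simp_rw [← sum_exp_signed_sum, Finset.mul_sum, mul_smul_comm]
  calc ∑ s : ι → ℤˣ, Real.cosh (t * ∑ i, s i • a i)
      = 2 ^ Fintype.card ι * ∏ i, Real.cosh (t * a i) := by
        simp_rw [Real.cosh_eq, ← Finset.sum_div, Finset.sum_add_distrib, ← neg_mul, hexp,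
          neg_mul, Real.cosh_neg]
        simp_rw [Real.cosh_eq]
        ring
    _ ≤ 2 ^ Fintype.card ι * ∏ i, Real.exp ((t * a i) ^ 2 / 2) := by
        gcongr with i
        exact Real.cosh_le_exp_half_sq _
    _ = 2 ^ Fintype.card ι * Real.exp (t ^ 2 * (∑ i, a i ^ 2) / 2) := by
        rw [← Real.exp_sum, ← Finset.sum_div, Finset.mul_sum]
        simp_rw [mul_pow]
    _ ≤ 2 ^ Fintype.card ι * Real.exp (t ^ 2 * R / 2) := by gcongr

theorem abs_le_add_exp_neg_mul_cosh (x c : ℝ) :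
    |x| ≤ c - 1 + 2 * Real.exp (-c) * Real.cosh x := by
  have htangent : |x| - c + 1 ≤ Real.exp (|x| - c) := Real.add_one_le_exp _
  have hexp : Real.exp (|x| - c) ≤ 2 * Real.exp (-c) * Real.cosh x := by
    rw [← Real.cosh_abs x, Real.cosh_eq, sub_eq_add_neg, Real.exp_add]
    linarith [mul_pos (Real.exp_pos (-c)) (Real.exp_pos (-|x|))]
  linarith

theorem abs_le_add_sum_exp_neg_mul_cosh_div {x : J → ℝ} {T : Finset J} {j : J} (hj : j ∈ T)
    {t : ℝ} (ht : 0 < t) (c : ℝ) :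
    |x j| ≤ (c - 1 + ∑ i ∈ T, 2 * Real.exp (-c) * Real.cosh (t * x i)) / t := by
  rw [le_div_iff₀' ht]
  calc t * |x j| = |t * x j| := by rw [abs_mul, abs_of_pos ht]
    _ ≤ c - 1 + 2 * Real.exp (-c) * Real.cosh (t * x j) := abs_le_add_exp_neg_mul_cosh _ c
    _ ≤ c - 1 + ∑ i ∈ T, 2 * Real.exp (-c) * Real.cosh (t * x i) := by
      gcongr
      exact Finset.single_le_sum (f := fun i => 2 * Real.exp (-c) * Real.cosh (t * x i))
        (fun i _ => by positivity) hj

theorem sum_biSup_enorm_signed_sum_le_of_pos {a : J → ι → ℝ} {T : Finset J} {N R t : ℝ}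
    (hN : 0 < N) (hTN : T.card ≤ N) (ha : ∀ j ∈ T, ∑ i, a j i ^ 2 ≤ R) (ht : 0 < t) :
    ∑ s : ι → ℤˣ, ⨆ j ∈ T, ‖∑ i, s i • a j i‖ₑ
      ≤ 2 ^ Fintype.card ι * ENNReal.ofReal ((Real.log (2 * N) + t ^ 2 * R / 2) / t) := by
  rcases T.eq_empty_or_nonempty with rfl | ⟨j₀, hj₀⟩
  · simp
  set n := Fintype.card ι
  -- This `c` makes the weights below, summed over `T`, average to at most `1` over the signs.
  set c := Real.log (2 * N) + t ^ 2 * R / 2 with hc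
  let w (s : ι → ℤˣ) (j : J) : ℝ := 2 * Real.exp (-c) * Real.cosh (t * ∑ i, s i • a j i)
  have hw_sum : ∑ s, ∑ j ∈ T, w s j ≤ 2 ^ n :=
    calc ∑ s, ∑ j ∈ T, w s j
        ≤ ∑ _j ∈ T, 2 * Real.exp (-c) * (2 ^ n * Real.exp (t ^ 2 * R / 2)) := by
          rw [Finset.sum_comm]
          refine Finset.sum_le_sum fun j hj => ?_
          rw [← Finset.mul_sum]
          gcongr
          exact sum_cosh_signed_sum_le (ha j hj) t
      _ = T.card * (2 ^ n / N) := by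
          rw [Finset.sum_const, nsmul_eq_mul, hc, neg_add, Real.exp_add, Real.exp_neg,
            Real.exp_neg, Real.exp_log (by positivity)]
          field_simp
      _ ≤ N * (2 ^ n / N) := by gcongr
      _ = 2 ^ n := mul_div_cancel₀ _ hN.ne'
  let M (s : ι → ℤˣ) : ℝ := (c - 1 + ∑ j ∈ T, w s j) / t
  have hM (s : ι → ℤˣ) (j : J) (hj : j ∈ T) : |∑ i, s i • a j i| ≤ M s :=
    abs_le_add_sum_exp_neg_mul_cosh_div (x := fun j => ∑ i, s i • a j i) hj ht c
  calc ∑ s : ι → ℤˣ, ⨆ j ∈ T, ‖∑ i, s i • a j i‖ₑ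
      ≤ ∑ s, ENNReal.ofReal (M s) := Finset.sum_le_sum fun s _ => iSup₂_le fun j hj =>
        Real.enorm_eq_ofReal_abs (∑ i, s i • a j i) ▸ ENNReal.ofReal_le_ofReal (hM s j hj)
    _ = ENNReal.ofReal (∑ s, M s) :=
        (ENNReal.ofReal_sum_of_nonneg fun s _ => (abs_nonneg _).trans (hM s j₀ hj₀)).symm
    _ ≤ ENNReal.ofReal (2 ^ n * (c / t)) := by
        rw [← Finset.sum_div, ← mul_div_assoc, Finset.sum_add_distrib, Finset.sum_const,
          Finset.card_univ, Fintype.card_fun, Fintype.card_units_int, nsmul_eq_mul, Nat.cast_pow,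
          Nat.cast_ofNat]
        gcongr
        linarith
    _ = 2 ^ n * ENNReal.ofReal (c / t) := by
        rw [ENNReal.ofReal_mul (by positivity), ENNReal.ofReal_pow two_pos.le,
          ENNReal.ofReal_ofNat]

theorem sum_biSup_enorm_signed_sum_le {a : J → ι → ℝ} {T : Finset J} {N R : ℝ} (hN : 1 ≤ N)
    (hTN : T.card ≤ N) (hR : 0 < R) (ha : ∀ j ∈ T, ∑ i, a j i ^ 2 ≤ R) :
    ∑ s : ι → ℤˣ, ⨆ j ∈ T, ‖∑ i, s i • a j i‖ₑ
      ≤ 2 ^ Fintype.card ι * ENNReal.ofReal √(2 * R * Real.log (2 * N)) := by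
  set L := Real.log (2 * N)
  -- `t = √(2 * L / R)` minimises `(L + t ^ 2 * R / 2) / t`.
  have hL : 0 < L := Real.log_pos (by linarith)
  have ht : 0 < √(2 * L / R) := by positivity
  have hbound : (L + √(2 * L / R) ^ 2 * R / 2) / √(2 * L / R) = √(2 * R * L) := by
    rw [div_eq_iff ht.ne', ← Real.sqrt_mul (by positivity), Real.sq_sqrt (by positivity),
      eq_comm, Real.sqrt_eq_iff_mul_self_eq (by positivity) (by positivity)]
    field_simp
    ring
  exact hbound ▸ sum_biSup_enorm_signed_sum_le_of_pos (by linarith) hTN ha ht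

end Rademacher

section SauerShelah

theorem sum_Iic_choose_le_pow (m d : ℕ) : ∑ i ∈ Finset.Iic d, m.choose i ≤ (m + 1) ^ d := by
  rw [add_pow, Nat.range_succ_eq_Iic]
  refine Finset.sum_le_sum fun i hi => (Nat.choose_le_pow m i).trans ?_
  rw [one_pow, mul_one]
  exact Nat.le_mul_of_pos_right _ (Nat.choose_pos (Finset.mem_Iic.1 hi))

variable {X ι : Type*} [Fintype ι] {C : Set (Set X)} {d : ℕ}

theorem Shatters.mono {C' : Set (Set X)} {F : Finset X} (hC : C ⊆ C') (hF : Shatters C F) :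
    Shatters C' F :=
  fun S hS => (hF S hS).imp fun _ hA => ⟨hC hA.1, hA.2⟩

open Classical in
/-- The traces of the family `C` on the points `z i`, `i : ι`, as sets of indices. -/
noncomputable def traces (C : Set (Set X)) (z : ι → X) : Finset (Finset ι) :=
  {u | ∃ A ∈ C, ∀ i, i ∈ u ↔ z i ∈ A}

theorem mem_traces {z : ι → X} {u : Finset ι} :
    u ∈ traces C z ↔ ∃ A ∈ C, ∀ i, i ∈ u ↔ z i ∈ A := by
  simp [traces]

variable [DecidableEq ι]

theorem injOn_of_shatters_traces {z : ι → X} {s : Finset ι} (hs : (traces C z).Shatters s) :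
    Set.InjOn z s := by
  intro i hi j hj hij
  obtain ⟨u, hu, hsu⟩ := hs (Finset.singleton_subset_iff.2 hi)
  obtain ⟨A, -, hA⟩ := mem_traces.1 hu
  have hiu : i ∈ s ∩ u := hsu ▸ Finset.mem_singleton_self i
  have hju : j ∈ s ∩ u := Finset.mem_inter.2
    ⟨hj, (hA j).2 (hij ▸ (hA i).1 (Finset.mem_inter.1 hiu).2)⟩
  exact (Finset.mem_singleton.1 (hsu ▸ hju)).symm

theorem shatters_image_of_shatters_traces [DecidableEq X] {z : ι → X} {s : Finset ι}
    (hs : (traces C z).Shatters s) : Shatters C (s.image z) := by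
  intro F hF
  obtain ⟨u, hu, hsu⟩ := hs (s.filter_subset (z · ∈ F))
  obtain ⟨A, hAC, hA⟩ := mem_traces.1 hu
  have hmem (i : ι) (hi : i ∈ s) : z i ∈ A ↔ z i ∈ F := by
    simpa [hi, hA] using Finset.ext_iff.1 hsu i
  refine ⟨A, hAC, Set.ext fun x => ⟨?_, fun hx => ?_⟩⟩
  · rintro ⟨hx, hxA⟩
    obtain ⟨i, hi, rfl⟩ := Finset.mem_image.1 hx
    exact (hmem i hi).1 hxA
  · obtain ⟨i, hi, rfl⟩ := Finset.mem_image.1 (hF hx)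
    exact ⟨hF hx, (hmem i hi).2 hx⟩

theorem vcDim_traces_le (hVC : ∀ F : Finset X, F.card = d → ¬ Shatters C F) (z : ι → X) :
    (traces C z).vcDim ≤ d := by
  classical
  refine Finset.sup_le fun s hs => ?_
  by_contra! hds
  obtain ⟨t, hts, htd⟩ := Finset.exists_subset_card_eq hds.le
  have ht : (traces C z).Shatters t := (Finset.mem_shatterer.1 hs).mono_right hts
  refine hVC (t.image z) ?_ (shatters_image_of_shatters_traces ht)
  rw [Finset.card_image_of_injOn (injOn_of_shatters_traces ht), htd]

omit [DecidableEq ι] in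
theorem card_traces_le (hVC : ∀ F : Finset X, F.card = d → ¬ Shatters C F) (z : ι → X) :
    (traces C z).card ≤ (Fintype.card ι + 1) ^ d := by
  classical
  calc (traces C z).card ≤ (traces C z).shatterer.card := Finset.card_le_card_shatterer _
    _ ≤ ∑ i ∈ Finset.Iic (traces C z).vcDim, (Fintype.card ι).choose i :=
      Finset.card_shatterer_le_sum_vcDim
    _ ≤ (Fintype.card ι + 1) ^ (traces C z).vcDim := sum_Iic_choose_le_pow _ _
    _ ≤ (Fintype.card ι + 1) ^ d := by
      gcongr
      · exact Nat.le_add_left 1 _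
      · exact vcDim_traces_le hVC z

end SauerShelah

section Deviation

theorem freq_eq_sum_indicator {X : Type*} (k : ℕ) (A : Set X) (p : Fin k → X) :
    freq k A p = ∑ i, A.indicator (fun _ => (k : ℝ)⁻¹) (p i) := by
  classical
  simp only [freq, Set.indicator_apply, ← Finset.sum_filter, Finset.sum_const, nsmul_eq_mul,
    div_eq_mul_inv]

theorem freq_mem_Icc {X : Type*} (k : ℕ) (A : Set X) (p : Fin k → X) :
    freq k A p ∈ Set.Icc (0 : ℝ) 1 := by
  classical
  refine ⟨by unfold freq; positivity, div_le_one_of_le₀ ?_ k.cast_nonneg⟩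
  exact_mod_cast (Finset.card_filter_le _ _).trans (Finset.card_fin k).le

theorem measurable_freq {X : Type*} [MeasurableSpace X] (k : ℕ) {A : Set X}
    (hA : MeasurableSet A) : Measurable (freq k A) := by
  simp_rw [funext (freq_eq_sum_indicator k A)]
  exact Finset.measurable_sum _ fun i _ =>
    (measurable_const.indicator hA).comp (measurable_pi_apply i)

variable {X : Type*} {C : Set (Set X)} {d k : ℕ}

/-- The bound on the expected uniform deviation of `k` samples over a family that shatters no set
of `d` points: the growth function of the family at `2 * k` points is at most `(2 * k + 1) ^ d`. -/
noncomputable def deviationBound (d k : ℕ) : ℝ :=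
  √(2 * (k : ℝ)⁻¹ * Real.log (2 * (2 * k + 1) ^ d))

theorem tendsto_deviationBound (d : ℕ) : Tendsto (deviationBound d) atTop (𝓝 0) := by
  have hodd : Tendsto (fun k : ℕ => (2 * k + 1 : ℝ)) atTop atTop :=
    tendsto_atTop_add_const_right _ _ (tendsto_natCast_atTop_atTop.const_mul_atTop two_pos)
  have hlog : Tendsto (fun k : ℕ => (k : ℝ)⁻¹ * Real.log (2 * k + 1)) atTop (𝓝 0) := by
    refine ((Real.tendsto_pow_log_div_mul_add_atTop (1 / 2) (-1 / 2) 1 (by norm_num)).comp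
      hodd).congr fun k => ?_
    simp only [Function.comp_apply, pow_one]
    rw [inv_mul_eq_div]
    congr 1
    ring
  have hconst : Tendsto (fun k : ℕ => (k : ℝ)⁻¹ * Real.log 2) atTop (𝓝 0) := by
    simpa only [zero_mul] using tendsto_inv_atTop_nhds_zero_nat.mul_const (Real.log 2)
  have hradicand : Tendsto (fun k : ℕ => 2 * (k : ℝ)⁻¹ * Real.log (2 * (2 * k + 1) ^ d))
      atTop (𝓝 0) := by
    have hsum := (hconst.add (hlog.const_mul (d : ℝ))).const_mul 2
    rw [mul_zero, add_zero, mul_zero] at hsum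
    refine hsum.congr fun k => ?_
    rw [Real.log_mul two_ne_zero (by positivity), Real.log_pow]
    ring
  rw [← Real.sqrt_zero]
  exact hradicand.sqrt

theorem sum_signed_biSup_indicator_sub_le (hVC : ∀ F : Finset X, F.card = d → ¬ Shatters C F)
    (hk : 0 < k) (z : Fin k → X × X) :
    ∑ s : Fin k → ℤˣ, ⨆ A ∈ C, ‖∑ i, s i • (A.indicator (fun _ => (k : ℝ)⁻¹) (z i).1
        - A.indicator (fun _ => (k : ℝ)⁻¹) (z i).2)‖ₑ
      ≤ 2 ^ Fintype.card (Fin k) * ENNReal.ofReal (deviationBound d k) := by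
  classical
  let points : Fin k ⊕ Fin k → X := Sum.elim (fun i => (z i).1) (fun i => (z i).2)
  let a (u : Finset (Fin k ⊕ Fin k)) (i : Fin k) : ℝ :=
    (if .inl i ∈ u then (k : ℝ)⁻¹ else 0) - (if .inr i ∈ u then (k : ℝ)⁻¹ else 0)
  have hcard : ((traces C points).card : ℝ) ≤ (2 * k + 1) ^ d := by
    have h := card_traces_le hVC points
    rw [Fintype.card_sum, Fintype.card_fin, ← two_mul] at h
    exact_mod_cast h
  have ha (u : Finset (Fin k ⊕ Fin k)) : ∑ i, a u i ^ 2 ≤ (k : ℝ)⁻¹ :=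
    calc ∑ i, a u i ^ 2 ≤ ∑ _i : Fin k, (k : ℝ)⁻¹ ^ 2 := Finset.sum_le_sum fun i _ => by
          simp only [a]
          split_ifs <;> simp
      _ = (k : ℝ)⁻¹ := by
          rw [Finset.sum_const, Finset.card_fin, nsmul_eq_mul]
          field_simp
  have hN : (1 : ℝ) ≤ (2 * k + 1) ^ d := one_le_pow₀ (by linarith [k.cast_nonneg (α := ℝ)])
  refine (Finset.sum_le_sum fun s _ => iSup₂_le fun A hA => ?_).trans
    (sum_biSup_enorm_signed_sum_le hN hcard (by positivity) fun u _ => ha u)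
  have htrace : ({i | points i ∈ A} : Finset _) ∈ traces C points :=
    mem_traces.2 ⟨A, hA, fun i => Finset.mem_filter_univ i⟩
  refine le_of_eq_of_le ?_ (le_biSup (fun u => ‖∑ i, s i • a u i‖ₑ) htrace)
  simp only [a, points, Finset.mem_filter_univ, Sum.elim_inl, Sum.elim_inr, Set.indicator_apply]

variable [MeasurableSpace X]

theorem lintegral_biSup_enorm_freq_sub_le (μ : Measure X) [IsProbabilityMeasure μ]
    (hC : C.Countable) (hCmeas : ∀ A ∈ C, MeasurableSet A)
    (hVC : ∀ F : Finset X, F.card = d → ¬ Shatters C F) (hk : 0 < k) :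
    ∫⁻ p, ⨆ A ∈ C, ‖freq k A p - (μ A).toReal‖ₑ ∂(Measure.pi fun _ : Fin k => μ)
      ≤ ENNReal.ofReal (deviationBound d k) := by
  have hdev (A : Set X) (hA : A ∈ C) (p : Fin k → X) : freq k A p - (μ A).toReal
      = ∑ i, (A.indicator (fun _ => (k : ℝ)⁻¹) (p i)
          - ∫ x, A.indicator (fun _ => (k : ℝ)⁻¹) x ∂μ) := by
    rw [Finset.sum_sub_distrib, ← freq_eq_sum_indicator, integral_indicator_const _ (hCmeas A hA),
      Finset.sum_const, Finset.card_fin, nsmul_eq_mul, smul_eq_mul, Measure.real]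
    field_simp
  calc _ = _ := lintegral_congr fun p => biSup_congr fun A hA => by rw [hdev A hA p]
    _ ≤ _ := lintegral_biSup_enorm_sum_sub_integral_le_of_signed μ hC
      (fun A hA => (integrable_const _).indicator (hCmeas A hA))
      (sum_signed_biSup_indicator_sub_le hVC hk)

theorem exists_ae_bound_freq_sub (μ : Measure X) [IsProbabilityMeasure μ]
    (hCmeas : ∀ A ∈ C, MeasurableSet A)
    (hVC : ∀ F : Finset X, F.card = d → ¬ Shatters C F) (hk : 0 < k) :
    ∃ h : (Fin k → X) → ℝ, Measurable h ∧ (∀ p, h p ∈ Set.Icc (0 : ℝ) 1) ∧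
      (∀ A ∈ C, ∀ᵐ p ∂(Measure.pi fun _ : Fin k => μ), |freq k A p - (μ A).toReal| ≤ h p) ∧
      ∫⁻ p, ENNReal.ofReal (h p) ∂(Measure.pi fun _ : Fin k => μ)
        ≤ ENNReal.ofReal (deviationBound d k) := by
  let dev (A : Set X) (p : Fin k → X) : ℝ≥0∞ := ‖freq k A p - (μ A).toReal‖ₑ
  have hdev_meas (A : Set X) (hA : A ∈ C) : Measurable (dev A) :=
    ((measurable_freq k (hCmeas A hA)).sub_const _).enorm
  have hdev_le (A : Set X) (p : Fin k → X) : dev A p ≤ 1 := by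
    obtain ⟨h0, h1⟩ := freq_mem_Icc k A p
    simp only [dev, Real.enorm_eq_ofReal_abs, ENNReal.ofReal_le_one]
    exact abs_sub_le_of_nonneg_of_le h0 h1 ENNReal.toReal_nonneg measureReal_le_one
  have hint (S : Set (Set X)) (hSC : S ⊆ C) (hS : S.Countable) :
      ∫⁻ p, ⨆ A ∈ S, dev A p ∂(Measure.pi fun _ : Fin k => μ)
        ≤ ENNReal.ofReal (deviationBound d k) :=
    lintegral_biSup_enorm_freq_sub_le μ hS (fun A hA => hCmeas A (hSC hA))
      (fun F hF hSF => hVC F hF (hSF.mono hSC)) hk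
  obtain ⟨S, hSC, hS, hdom⟩ := exists_countable_forall_ae_le_biSup
    (fun A hA => (hdev_meas A hA).aemeasurable)
    fun S hSC hS => ne_top_of_le_ne_top ENNReal.ofReal_ne_top (hint S hSC hS)
  have hsup_le (p : Fin k → X) : ⨆ A ∈ S, dev A p ≤ 1 := iSup₂_le fun A _ => hdev_le A p
  have hsup_ne_top (p : Fin k → X) : ⨆ A ∈ S, dev A p ≠ ∞ :=
    ne_top_of_le_ne_top ENNReal.one_ne_top (hsup_le p)
  refine ⟨fun p => (⨆ A ∈ S, dev A p).toReal,
    (Measurable.biSup S hS fun A hA => hdev_meas A (hSC hA)).ennreal_toReal,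
    fun p => ⟨ENNReal.toReal_nonneg, ENNReal.toReal_mono ENNReal.one_ne_top (hsup_le p)⟩,
    fun A hA => ?_, ?_⟩
  · filter_upwards [hdom A hA] with p hp
    rwa [← ENNReal.ofReal_le_iff_le_toReal (hsup_ne_top p), ← Real.enorm_eq_ofReal_abs]
  · simpa only [ENNReal.ofReal_toReal (hsup_ne_top _)] using hint S hSC hS

end Deviation

theorem stmt6 {X : Type*} [MeasurableSpace X]
    (μ : Measure X) [IsProbabilityMeasure μ]
    (C : Set (Set X)) (hCmeas : ∀ A ∈ C, MeasurableSet A)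
    (d : ℕ) (hVC : ∀ F : Finset X, F.card = d → ¬ Shatters C F)
    (G : (k : ℕ) → (Fin k → X) → ℝ)
    (hGmeas : ∀ k, 1 ≤ k → Measurable (G k))
    (hGrange : ∀ k, 1 ≤ k → ∀ p, G k p ∈ Set.Icc (0 : ℝ) 1)
    (hGup : ∀ k, 1 ≤ k → ∀ A ∈ C,
      ∀ᵐ p ∂(Measure.pi fun _ : Fin k => μ), |freq k A p - (μ A).toReal| ≤ G k p)
    (hGmin : ∀ k, 1 ≤ k → ∀ h : (Fin k → X) → ℝ, Measurable h →
      (∀ p, h p ∈ Set.Icc (0 : ℝ) 1) →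
      (∀ A ∈ C, ∀ᵐ p ∂(Measure.pi fun _ : Fin k => μ),
        |freq k A p - (μ A).toReal| ≤ h p) →
      ∀ᵐ p ∂(Measure.pi fun _ : Fin k => μ), G k p ≤ h p) :
    ∀ ε : ℝ, 0 < ε →
      Filter.Tendsto (fun k => (Measure.pi fun _ : Fin k => μ) {p | ε < G k p})
        Filter.atTop (nhds 0) := by
  intro ε hε
  have htail (k : ℕ) (hk : 1 ≤ k) : (Measure.pi fun _ : Fin k => μ) {p | ε < G k p}
      ≤ ENNReal.ofReal (deviationBound d k) / ENNReal.ofReal ε := by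
    obtain ⟨h, hmeas, hrange, hup, hint⟩ := exists_ae_bound_freq_sub μ hCmeas hVC hk
    calc (Measure.pi fun _ : Fin k => μ) {p | ε < G k p}
        ≤ (Measure.pi fun _ : Fin k => μ) {p | ENNReal.ofReal ε ≤ ENNReal.ofReal (h p)} := by
          refine measure_mono_ae ?_
          filter_upwards [hGmin k hk h hmeas hrange hup] with p hGh hεG
          exact ENNReal.ofReal_le_ofReal (hεG.le.trans hGh)
      _ ≤ (∫⁻ p, ENNReal.ofReal (h p) ∂(Measure.pi fun _ : Fin k => μ)) / ENNReal.ofReal ε :=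
          meas_ge_le_lintegral_div hmeas.ennreal_ofReal.aemeasurable
            (ENNReal.ofReal_pos.2 hε).ne' ENNReal.ofReal_ne_top
      _ ≤ ENNReal.ofReal (deviationBound d k) / ENNReal.ofReal ε := ENNReal.div_le_div_right hint _
  have hlim : Tendsto (fun k => ENNReal.ofReal (deviationBound d k) / ENNReal.ofReal ε)
      atTop (𝓝 0) := by
    simpa using ENNReal.Tendsto.div_const (ENNReal.tendsto_ofReal (tendsto_deviationBound d))
      (Or.inr (ENNReal.ofReal_pos.2 hε).ne')
  exact tendsto_of_tendsto_of_tendsto_of_le_of_le' tendsto_const_nhds hlim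
    (Eventually.of_forall fun _ => zero_le) ((eventually_ge_atTop 1).mono htail)
end
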